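/- Let M = (X, A, P, R, γ) and M̄ = (X, A, P̄, R̄, γ) be two finite MDPs over the same state set X, action set A and discount factor γ ∈ [0,1), differing only in their transition and reward functions, and suppose the rewards of M satisfy 0 ≤ R(x,a,y) ≤ R⁰ for all (x,a,y). Let ε > 0 and set ε' := (1−γ)² ε / |X|. If |P(x,a,y) R(x,a,y) − P̄(x,a,y) R̄(x,a,y)| ≤ ε' R⁰ and |P(x,a,y) − P̄(x,a,y)| ≤ ε' for all (x,a,y) ∈ X × A × X, then for every stationary policy π and every (x,a) ∈ X × A, |Q^π_M(x,a) − Q^π_M̄(x,a)| ≤ ε R⁰. -/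

import Mathlib

lemma avg_abs_le {ι : Type*} [Fintype ι] (w g : ι → ℝ) (M : ℝ) (hw : ∀ i, 0 ≤ w i)
    (h1 : ∑ i, w i = 1) (hg : ∀ i, |g i| ≤ M) : |∑ i, w i * g i| ≤ M := by
  calc |∑ i, w i * g i| ≤ ∑ i, |w i * g i| := Finset.abs_sum_le_sum_abs _ _
    _ ≤ ∑ i, w i * M := by
        refine Finset.sum_le_sum fun i _ => ?_
        rw [abs_mul, abs_of_nonneg (hw i)]
        exact mul_le_mul_of_nonneg_left (hg i) (hw i)
    _ = M := by rw [← Finset.sum_mul, h1, one_mul]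

lemma contraction_bound {X A : Type*} [Fintype X] [Nonempty X] [Fintype A] [Nonempty A]
    (f : X → A → ℝ) (γ c : ℝ) (hγ1 : γ < 1)
    (h : ∀ M, (∀ x a, |f x a| ≤ M) → ∀ x a, |f x a| ≤ c + γ * M) :
    ∀ x a, |f x a| ≤ c / (1 - γ) := by
  obtain ⟨p, hp⟩ := Finite.exists_max (fun p : X × A => |f p.1 p.2|)
  intro x a
  refine (hp (x, a)).trans ?_
  have := h _ (fun x a => hp (x, a)) p.1 p.2
  rw [le_div_iff₀ (by linarith)]
  linarith

/-- Dimension-respecting simulation lemma: if the transition parameters of two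
MDPs are `ε'`-close and the `P·R` products are `ε'R⁰`-close, with
`ε' = (1-γ)² ε / |X|`, then for every stationary policy the value functions of
the two MDPs are `εR⁰`-close. -/
theorem stmt_1
    {X A : Type*} [Fintype X] [Nonempty X] [Fintype A] [Nonempty A]
    (γ : ℝ) (hγ0 : 0 ≤ γ) (hγ1 : γ < 1)
    (P Pbar R Rbar : X → A → X → ℝ) (R0 : ℝ)
    (hP0 : ∀ x a y, 0 ≤ P x a y) (hP1 : ∀ x a, ∑ y, P x a y = 1)
    (hPbar0 : ∀ x a y, 0 ≤ Pbar x a y) (hPbar1 : ∀ x a, ∑ y, Pbar x a y = 1)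
    (hR : ∀ x a y, 0 ≤ R x a y ∧ R x a y ≤ R0)
    (ε ε' : ℝ) (hε : 0 < ε)
    (hε' : ε' = (1 - γ) ^ 2 * ε / (Fintype.card X : ℝ))
    (hclose1 : ∀ x a y, |P x a y * R x a y - Pbar x a y * Rbar x a y| ≤ ε' * R0)
    (hclose2 : ∀ x a y, |P x a y - Pbar x a y| ≤ ε')
    (π : X → A → ℝ) (hπ0 : ∀ x a, 0 ≤ π x a) (hπ1 : ∀ x, ∑ a, π x a = 1)
    (Q Qbar : X → A → ℝ)
    (hQ : ∀ x a, Q x a = ∑ y, P x a y * (R x a y + γ * ∑ b, π y b * Q y b))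
    (hQbar : ∀ x a,
      Qbar x a = ∑ y, Pbar x a y * (Rbar x a y + γ * ∑ b, π y b * Qbar y b)) :
    ∀ x a, |Q x a - Qbar x a| ≤ ε * R0 := by
  have h1γ : 0 < 1 - γ := by linarith
  have hn : (0 : ℝ) < Fintype.card X := by exact_mod_cast Fintype.card_pos
  have hε'0 : 0 ≤ ε' := by rw [hε']; positivity
  have hQb : ∀ x a, |Q x a| ≤ R0 / (1 - γ) := by
    refine contraction_bound Q γ R0 hγ1 fun M hM x a => ?_
    rw [hQ x a]
    refine avg_abs_le _ _ _ (hP0 x a) (hP1 x a) fun y => ?_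
    refine (abs_add_le _ _).trans (add_le_add ?_ ?_)
    · rw [abs_of_nonneg (hR x a y).1]; exact (hR x a y).2
    · rw [abs_mul, abs_of_nonneg hγ0]
      exact mul_le_mul_of_nonneg_left (avg_abs_le _ _ _ (hπ0 y) (hπ1 y) (hM y)) hγ0
  have hV : ∀ y, |∑ b, π y b * Q y b| ≤ R0 / (1 - γ) := fun y =>
    avg_abs_le _ _ _ (hπ0 y) (hπ1 y) (hQb y)
  have hc : ε * R0 = ((1 - γ) * ε * R0) / (1 - γ) := by field_simp
  rw [hc]
  refine contraction_bound (fun x a => Q x a - Qbar x a) γ _ hγ1 fun M hM x a => ?_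
  have key : Q x a - Qbar x a =
      ∑ y, ((P x a y * R x a y - Pbar x a y * Rbar x a y)
        + γ * ((P x a y - Pbar x a y) * ∑ b, π y b * Q y b))
      + γ * ∑ y, Pbar x a y * ∑ b, π y b * (Q y b - Qbar y b) := by
    rw [hQ x a, hQbar x a, Finset.mul_sum, ← Finset.sum_add_distrib, ← Finset.sum_sub_distrib]
    refine Finset.sum_congr rfl fun y _ => ?_
    simp only [mul_sub, Finset.sum_sub_distrib]
    ring
  show |Q x a - Qbar x a| ≤ _
  rw [key]
  refine (abs_add_le _ _).trans (add_le_add ?_ ?_)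
  · calc _ ≤ ∑ y, |(P x a y * R x a y - Pbar x a y * Rbar x a y)
        + γ * ((P x a y - Pbar x a y) * ∑ b, π y b * Q y b)| := Finset.abs_sum_le_sum_abs _ _
      _ ≤ ∑ _y : X, (ε' * R0 + γ * (ε' * (R0 / (1 - γ)))) := by
        refine Finset.sum_le_sum fun y _ => (abs_add_le _ _).trans (add_le_add (hclose1 x a y) ?_)
        rw [abs_mul, abs_of_nonneg hγ0, abs_mul]
        exact mul_le_mul_of_nonneg_left
          (mul_le_mul (hclose2 x a y) (hV y) (abs_nonneg _) hε'0) hγ0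
      _ = (1 - γ) * ε * R0 := by
        rw [Finset.sum_const, Finset.card_univ, nsmul_eq_mul, hε']
        field_simp
        ring
      _ ≤ _ := le_rfl
  · rw [abs_mul, abs_of_nonneg hγ0]
    exact mul_le_mul_of_nonneg_left (avg_abs_le _ _ _ (hPbar0 x a) (hPbar1 x a) fun y =>
      avg_abs_le _ _ _ (hπ0 y) (hπ1 y) (hM y)) hγ0
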